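/- Fix finite nonempty sets SP₀, SQ₀, SP₁, SQ₁ ⊂ ℕ with 0 ∈ SP₀ ∪ SQ₀, 0 ∈ SP₁ ∪ SQ₁, gcd of the nonzero elements of SP₀ ∪ SQ₀ ∪ SP₁ ∪ SQ₁ equal to 1, and set a₀n = max(SP₀ ∪ SQ₀) ≥ 1 and a₁m = max(SP₁ ∪ SQ₁) ≥ 1. Suppose SQ₀ ⊄ SP₀ and SQ₁ ⊄ SP₁. Then for generic coefficients the following holds for every irreducible φ ∈ ℂ[x,y] with φ(P₀/Q₀, P₁/Q₁) = 0 in ℂ(t): φ has a monomial not involving x, and the smallest j such that (0,j) ∈ supp(φ) equals [0 ∈ SQ₁ \ SP₁]·(min SP₀) + [a₁m ∈ SQ₁ \ SP₁]·(a₀n − max SP₀). -/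

import Mathlib

open Polynomial

/-- The univariate polynomial with support `S` and coefficient vector `c`. -/
noncomputable def polyOfCoeffs (S : Finset ℕ) (c : {s // s ∈ S} → ℂ) : Polynomial ℂ :=
  ∑ s ∈ S.attach, Polynomial.C (c s) * Polynomial.X ^ (s : ℕ)

/-- The image of that polynomial in the field of rational functions `ℂ(t)`. -/
noncomputable def ratFuncOf (S : Finset ℕ) (c : {s // s ∈ S} → ℂ) : RatFunc ℂ :=
  algebraMap (Polynomial ℂ) (RatFunc ℂ) (polyOfCoeffs S c)

/-- The Newton polygon of a bivariate polynomial: the convex hull in `ℝ²` of its support. -/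
noncomputable def newtonPolygon (φ : MvPolynomial (Fin 2) ℂ) : Set (ℝ × ℝ) :=
  convexHull ℝ ((fun d : Fin 2 →₀ ℕ => ((d 0 : ℝ), (d 1 : ℝ))) '' ↑φ.support)

/-- `φ(P₀/Q₀, P₁/Q₁) = 0` in `ℂ(t)`, where `P₀, Q₀, P₁, Q₁` have supports
`SS 0, SS 1, SS 2, SS 3` and coefficient vector `c`. -/
def vanishesDiff (SS : Fin 4 → Finset ℕ)
    (c : (Σ i : Fin 4, {s // s ∈ SS i}) → ℂ) (φ : MvPolynomial (Fin 2) ℂ) : Prop :=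
  MvPolynomial.aeval
    ![ratFuncOf (SS 0) (fun s => c ⟨0, s⟩) / ratFuncOf (SS 1) (fun s => c ⟨1, s⟩),
      ratFuncOf (SS 2) (fun s => c ⟨2, s⟩) / ratFuncOf (SS 3) (fun s => c ⟨3, s⟩)] φ = 0

/-!
Let `R(x, y)` be the resultant in `t` of `P₀ - x Q₀` and `P₁ - y Q₁`, with nominal degrees `n` and
`m`. It vanishes on the curve and has degree at most `n` in `y`. For generic coefficients
`K(x, y) = K(t)`, so `[K(x, y) : K(x)] = n` and every irreducible `φ` vanishing on the curve has
degree at least `n` in `y`; hence `R = φ · c(x)`, and the lowest exponent of `y` in `φ(0, y)` is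
that of `R(0, y)`. Write `P₀ = t ^ a f` with `deg f = d` and `n = a + d + e`. At `x = 0` only `P₀`
is left of the first argument, and multiplicativity of the resultant gives
`R(0, y) = ± (p_m - y q_m) ^ e (p_0 - y q_0) ^ a Res_t (f, P₁ - y Q₁)`,
where `p_k`, `q_k` are the coefficients of `t ^ k` in `P₁`, `Q₁`, and the last factor does not
vanish at `y = 0`.

The equality `K(x, y) = K(t)` holds as soon as, for one value `t`, the fibres of `P₀ / Q₀` and
`P₁ / Q₁` through `t` meet only in `t` itself, simply; that is, the Bézoutians of the two fractions
at `t` are coprime. At `t = 1` the Bézoutian is `∑ p_i q_j ([i] - [j])` with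
`[s] = 1 + X + ⋯ + X ^ (s - 1)`, and the gcd condition on the exponents says that no `x` is a root
of all the `[s]`.
-/

section Resultant

theorem sylvester_apply_natDegree_le {R : Type*} [CommRing R] {f g : R[X][X]} {n m a b : ℕ}
    (hf : ∀ i, (f.coeff i).natDegree ≤ a) (hg : ∀ i, (g.coeff i).natDegree ≤ b)
    (i j : Fin (n + m)) :
    (sylvester f g n m i j).natDegree ≤ Fin.addCases (fun _ => b) (fun _ => a) j := by
  induction j using Fin.addCases with
  | left j =>
    simp only [sylvester, Matrix.of_apply, Fin.addCases_left]
    split_ifs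
    exacts [hg _, by simp]
  | right j =>
    simp only [sylvester, Matrix.of_apply, Fin.addCases_right]
    split_ifs
    exacts [hf _, by simp]

theorem natDegree_resultant_le {R : Type*} [CommRing R] {f g : R[X][X]} {n m a b : ℕ}
    (hf : ∀ i, (f.coeff i).natDegree ≤ a) (hg : ∀ i, (g.coeff i).natDegree ≤ b) :
    (resultant f g n m).natDegree ≤ n * b + m * a := by
  rw [resultant, Matrix.det_apply]
  refine natDegree_sum_le_of_forall_le _ _ fun σ _ => (natDegree_smul_le _ _).trans ?_
  calc _ ≤ ∑ j, (sylvester f g n m (σ j) j).natDegree := natDegree_prod_le _ _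
    _ ≤ ∑ j : Fin (n + m), Fin.addCases (fun _ => b) (fun _ => a) j :=
        Finset.sum_le_sum fun j _ => sylvester_apply_natDegree_le hf hg _ j
    _ = n * b + m * a := by simp [Fin.sum_univ_add]

theorem resultant_eq_zero_of_eval_eq_zero {R : Type*} [CommRing R] {f g : R[X]} {n m : ℕ} {t : R}
    (hf : f.natDegree ≤ n) (hg : g.natDegree ≤ m) (h : n ≠ 0 ∨ m ≠ 0)
    (hft : f.eval t = 0) (hgt : g.eval t = 0) : resultant f g n m = 0 := by
  obtain ⟨p, q, -, -, hpq⟩ := exists_mul_add_mul_eq_C_resultant f g hf hg h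
  simpa [hft, hgt] using (congrArg (eval t) hpq).symm

variable {K : Type*} [Field K]

theorem isCoprime_of_resultant_ne_zero {f g : K[X]} {n m : ℕ} (hf : f.natDegree ≤ n)
    (hg : g.natDegree ≤ m) (h : n ≠ 0 ∨ m ≠ 0) (hr : resultant f g n m ≠ 0) : IsCoprime f g := by
  obtain ⟨p, q, -, -, hpq⟩ := exists_mul_add_mul_eq_C_resultant f g hf hg h
  refine ⟨C (resultant f g n m)⁻¹ * p, C (resultant f g n m)⁻¹ * q, ?_⟩
  linear_combination C (resultant f g n m)⁻¹ * hpq +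
    (by rw [← C_mul, inv_mul_cancel₀ hr, C_1] :
      C (resultant f g n m)⁻¹ * C (resultant f g n m) = 1)

theorem resultant_ne_zero_of_isCoprime {f g : K[X]} {m : ℕ} (hf : f ≠ 0)
    (hg : g.natDegree ≤ m) (h : IsCoprime f g) : resultant f g f.natDegree m ≠ 0 := by
  obtain ⟨k, rfl⟩ := Nat.exists_eq_add_of_le hg
  rw [resultant_add_right_deg _ _ _ _ _ le_rfl]
  simpa [hf] using resultant_ne_zero f g h

theorem resultant_X_pow_mul {R : Type*} [CommRing R] {f g : R[X]} {d m : ℕ} (a e : ℕ)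
    (hf : f.natDegree ≤ d) (hg : g.natDegree ≤ m) :
    resultant (X ^ a * f) g (a + d + e) m =
      (-1) ^ (m * e) * g.coeff m ^ e * (g.coeff 0 ^ a * resultant f g d m) := by
  nontriviality R
  obtain ⟨k, rfl⟩ := Nat.exists_eq_add_of_le hf
  have hXf : (X ^ a * f).natDegree ≤ a + f.natDegree :=
    natDegree_mul_le.trans (by rw [natDegree_X_pow])
  have hmul := resultant_mul_left (X ^ a) f g m hg
  rw [natDegree_X_pow, resultant_X_pow_left _ _ _ hg] at hmul
  rw [← add_assoc, add_assoc, resultant_add_left_deg _ _ _ _ _ hXf, hmul,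
    resultant_add_left_deg _ _ _ _ _ le_rfl]
  ring

end Resultant

section PlaneCurve

theorem dvd_of_irreducible_of_eval₂_eq_zero {R L : Type*} [CommRing R] [IsDomain R]
    [IsGCDMonoid R] [Field L] {f : R →+* L} (hf : Function.Injective f) {y : L} {Φ Ψ : R[X]}
    (hΦ : Irreducible Φ) (hΦ0 : eval₂ f y Φ = 0) (hΨ0 : eval₂ f y Ψ = 0) : Φ ∣ Ψ := by
  algebraize [f]
  have : FaithfulSMul R L := (faithfulSMul_iff_algebraMap_injective R L).mpr hf
  let := FractionRing.liftAlgebra R L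
  have hdeg : Φ.natDegree ≠ 0 := fun h => by
    obtain ⟨a, rfl⟩ := natDegree_eq_zero.mp h
    rw [eval₂_C, map_eq_zero_iff f hf] at hΦ0
    exact hΦ.ne_zero (by rw [hΦ0, C_0])
  have hprim := hΦ.isPrimitive hdeg
  have hirr := (hprim.irreducible_iff_irreducible_map_fraction_map (K := FractionRing R)).mp hΦ
  have hroot {p : R[X]} (hp : eval₂ f y p = 0) :
      aeval y (p.map (algebraMap R (FractionRing R))) = 0 := by
    rwa [aeval_map_algebraMap]
  refine hprim.dvd_of_fraction_map_dvd_fraction_map (K := FractionRing R)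
    ((Dvd.intro _ (minpoly.eq_of_irreducible hirr (hroot hΦ0))).trans
      (minpoly.dvd _ _ (hroot hΨ0)))

theorem finrank_le_natDegree_of_adjoin_eq_top {E L : Type*} [Field E] [Field L] [Algebra E L]
    {y : L} (hy : IntermediateField.adjoin E {y} = ⊤) {p : E[X]} (hp : p ≠ 0)
    (h : aeval y p = 0) : Module.finrank E L ≤ p.natDegree := by
  have hint : IsIntegral E y := IsAlgebraic.isIntegral ⟨p, hp, h⟩
  rw [← IntermediateField.finrank_top', ← hy, IntermediateField.adjoin.finrank hint]
  exact natDegree_le_natDegree (minpoly.degree_le_of_ne_zero E y hp h)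

theorem aevalAeval_eq_eval₂ {K L : Type*} [CommSemiring K] [CommSemiring L] [Algebra K L] (x y : L)
    (Φ : K[X][X]) : aevalAeval x y Φ = eval₂ (aeval x : K[X] →ₐ[K] L).toRingHom y Φ := by
  induction Φ using Polynomial.induction_on' with
  | add p q hp hq => rw [map_add, eval₂_add, hp, hq]
  | monomial n p => simp [← C_mul_X_pow_eq_monomial, eval₂_mul]

variable {K L : Type*} [Field K] [Field L] [Algebra K L] {x y : L}

theorem dvd_of_irreducible_of_aevalAeval_eq_zero (hx : Transcendental K x) {Φ Ψ : K[X][X]}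
    (hΦ : Irreducible Φ) (hΦ0 : aevalAeval x y Φ = 0) (hΨ0 : aevalAeval x y Ψ = 0) : Φ ∣ Ψ := by
  rw [aevalAeval_eq_eval₂] at hΦ0 hΨ0
  exact dvd_of_irreducible_of_eval₂_eq_zero (transcendental_iff_injective.mp hx) hΦ hΦ0 hΨ0

open IntermediateField in
theorem finrank_adjoin_le_natDegree (hx : Transcendental K x) (hxy : K⟮x, y⟯ = ⊤)
    {Φ : K[X][X]} (hΦ : Φ ≠ 0) (h : aevalAeval x y Φ = 0) :
    Module.finrank K⟮x⟯ L ≤ Φ.natDegree := by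
  let f : K[X] →+* K⟮x⟯ := (aeval (AdjoinSimple.gen K x) : K[X] →ₐ[K] K⟮x⟯)
  have hcomp : (algebraMap K⟮x⟯ L).comp f = (aeval x : K[X] →ₐ[K] L).toRingHom := by
    ext <;> simp [f]
  have hf : Function.Injective f := by
    refine Function.Injective.of_comp (f := algebraMap K⟮x⟯ L) ?_
    rw [← RingHom.coe_comp, hcomp]
    exact transcendental_iff_injective.mp hx
  rw [← natDegree_map_eq_of_injective hf]
  refine finrank_le_natDegree_of_adjoin_eq_top (y := y) ?_
    ((Polynomial.map_ne_zero_iff hf).mpr hΦ) ?_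
  · rw [← restrictScalars_eq_top_iff (K := K), adjoin_simple_adjoin_simple, hxy]
  · rw [aeval_def, eval₂_map, hcomp, ← aevalAeval_eq_eval₂, h]

open IntermediateField in
theorem finrank_adjoin_div {P Q : K[X]} (hP : P ≠ 0) (hQ : Q ≠ 0) (h : IsCoprime P Q) :
    Module.finrank K⟮algebraMap K[X] (RatFunc K) P / algebraMap K[X] (RatFunc K) Q⟯ (RatFunc K) =
      max P.natDegree Q.natDegree := by
  rw [RatFunc.finrank_eq_max_natDegree]
  set x := algebraMap K[X] (RatFunc K) P / algebraMap K[X] (RatFunc K) Q with hx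
  have hx0 : x ≠ 0 := div_ne_zero (by simpa using hP) (by simpa using hQ)
  have hcross : x.num * Q = P * x.denom := (RatFunc.num_mul_eq_mul_denom_iff hQ).mpr hx
  rw [le_antisymm (natDegree_le_of_dvd (RatFunc.num_div_dvd P hQ) hP)
      (natDegree_le_of_dvd (h.dvd_of_dvd_mul_right (Dvd.intro _ hcross.symm))
        (RatFunc.num_ne_zero hx0)),
    le_antisymm (natDegree_le_of_dvd (RatFunc.denom_div_dvd P Q) hQ)
      (natDegree_le_of_dvd (h.symm.dvd_of_dvd_mul_left (Dvd.intro_left _ hcross))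
        x.denom_ne_zero)]

end PlaneCurve

section Bezoutian

/-- The Bézoutian of `P` and `Q` with one argument specialized to `t`, namely the polynomial
`(P(X) Q(t) - P(t) Q(X)) / (X - t)`. Its roots are the other points of the fibre of `P / Q`
through `t`. -/
noncomputable def bezoutian {R : Type*} [CommRing R] (P Q : R[X]) (t : R) : R[X] :=
  (C (Q.eval t) * P - C (P.eval t) * Q) /ₘ (X - C t)

theorem X_sub_C_mul_bezoutian {R : Type*} [CommRing R] (P Q : R[X]) (t : R) :
    (X - C t) * bezoutian P Q t = C (Q.eval t) * P - C (P.eval t) * Q := by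
  rw [bezoutian, mul_divByMonic_eq_iff_isRoot]
  simp [mul_comm]

theorem map_bezoutian {R S : Type*} [CommRing R] [CommRing S] (f : R →+* S) (P Q : R[X]) (t : R) :
    (bezoutian P Q t).map f = bezoutian (P.map f) (Q.map f) (f t) := by
  rw [bezoutian, bezoutian, map_divByMonic _ (monic_X_sub_C t)]
  simp [eval_map_apply]

theorem map_resultant_bezoutian {R S : Type*} [CommRing R] [CommRing S] (f : R →+* S)
    (P₀ Q₀ P₁ Q₁ : R[X]) (t : R) (k m : ℕ) :
    f (resultant (bezoutian P₀ Q₀ t) (bezoutian P₁ Q₁ t) k m) =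
      resultant (bezoutian (P₀.map f) (Q₀.map f) (f t))
        (bezoutian (P₁.map f) (Q₁.map f) (f t)) k m := by
  rw [← resultant_map_map, map_bezoutian, map_bezoutian]

theorem natDegree_bezoutian_le {R : Type*} [CommRing R] {P Q : R[X]} {n : ℕ}
    (hP : P.natDegree ≤ n) (hQ : Q.natDegree ≤ n) (t : R) :
    (bezoutian P Q t).natDegree ≤ n - 1 := by
  nontriviality R
  rw [bezoutian, natDegree_divByMonic _ (monic_X_sub_C t), natDegree_X_sub_C]
  exact Nat.sub_le_sub_right ((natDegree_sub_le _ _).trans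
    (max_le ((natDegree_C_mul_le _ _).trans hP) ((natDegree_C_mul_le _ _).trans hQ))) 1

/-- The polynomial `P - z Q`, whose roots form the fibre of `P / Q` over `z`. The value `z` may lie
in any algebra over the ring of coefficients. -/
noncomputable def fiberPoly {K R : Type*} [CommRing K] [CommRing R] [Algebra K R] (P Q : K[X])
    (z : R) : R[X] :=
  P.map (algebraMap K R) - C z * Q.map (algebraMap K R)

section Map

variable {K R : Type*} [CommRing K] [CommRing R] [Algebra K R] (P Q : K[X])

theorem map_fiberPoly {S : Type*} [CommRing S] [Algebra K S] (f : R →ₐ[K] S) (z : R) :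
    (fiberPoly P Q z).map (f : R →+* S) = fiberPoly P Q (f z) := by
  simp [fiberPoly, Polynomial.map_map]

theorem coeff_fiberPoly (z : R) (k : ℕ) :
    (fiberPoly P Q z).coeff k = algebraMap K R (P.coeff k) - z * algebraMap K R (Q.coeff k) := by
  simp [fiberPoly]

variable {P Q} in
theorem natDegree_fiberPoly_le {n : ℕ} (hP : P.natDegree ≤ n) (hQ : Q.natDegree ≤ n) (z : R) :
    (fiberPoly P Q z).natDegree ≤ n :=
  (natDegree_sub_le _ _).trans (max_le (natDegree_map_le.trans hP)
    ((natDegree_C_mul_le _ _).trans (natDegree_map_le.trans hQ)))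

end Map

variable {K L : Type*} [Field K] [Field L] [Algebra K L]

theorem eval_fiberPoly_div (P : K[X]) {Q : K[X]} {t : L} (hQ : aeval t Q ≠ 0) :
    (fiberPoly P Q (aeval t P / aeval t Q)).eval t = 0 := by
  simp [fiberPoly, eval_map_algebraMap, div_mul_cancel₀ _ hQ]

theorem fiberPoly_div_dvd (P : K[X]) {Q : K[X]} {t : L} (hQ : aeval t Q ≠ 0) :
    fiberPoly P Q (aeval t P / aeval t Q) ∣
      (X - C t) * bezoutian (P.map (algebraMap K L)) (Q.map (algebraMap K L)) t := by
  refine Dvd.intro_left (C (aeval t Q)) ?_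
  rw [X_sub_C_mul_bezoutian, eval_map_algebraMap, eval_map_algebraMap, fiberPoly, mul_sub,
    ← mul_assoc, ← C_mul, mul_div_cancel₀ _ hQ]

-- `t` is the only common root of `A` and `B`, so its minimal polynomial is linear.
theorem mem_range_algebraMap_of_isCoprime {t : L} {A B : K[X]} {a b : L[X]}
    (hA : aeval t A = 0) (hB : aeval t B = 0)
    (hAa : A.map (algebraMap K L) ∣ (X - C t) * a) (hBb : B.map (algebraMap K L) ∣ (X - C t) * b)
    (h : IsCoprime a b) : t ∈ (algebraMap K L).range := by
  obtain ⟨u, v, huv⟩ := h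
  have hdvd : (minpoly K t).map (algebraMap K L) ∣ X - C t := by
    have hsum := dvd_add (((Polynomial.map_dvd _ (minpoly.dvd K t hA)).trans hAa).mul_left u)
      (((Polynomial.map_dvd _ (minpoly.dvd K t hB)).trans hBb).mul_left v)
    rwa [show u * ((X - C t) * a) + v * ((X - C t) * b) = X - C t by
      linear_combination (X - C t) * huv] at hsum
  have hint : IsIntegral K t := by
    by_contra h
    rw [minpoly.eq_zero h, Polynomial.map_zero, zero_dvd_iff] at hdvd
    exact X_sub_C_ne_zero t hdvd
  have hle := natDegree_le_of_dvd hdvd (X_sub_C_ne_zero t)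
  rw [natDegree_map, natDegree_X_sub_C] at hle
  exact minpoly.natDegree_eq_one_iff.mp (hle.antisymm (minpoly.natDegree_pos hint))

end Bezoutian

section Properness

variable {K : Type*} [Field K] {P₀ Q₀ P₁ Q₁ : K[X]} {n m : ℕ}

theorem aeval_ratFuncX_ne_zero {Q : K[X]} (hQ : Q ≠ 0) : aeval (RatFunc.X : RatFunc K) Q ≠ 0 := by
  rw [RatFunc.aeval_X_left_eq_algebraMap]
  exact RatFunc.algebraMap_ne_zero hQ

-- Both resultants are specializations of the one at the generic point `X` over `K[X]`.
theorem resultant_bezoutian_X_ne_zero {t : K} {k : ℕ}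
    (h : resultant (bezoutian P₀ Q₀ t) (bezoutian P₁ Q₁ t) k m ≠ 0) :
    let ι := algebraMap K (RatFunc K)
    resultant (bezoutian (P₀.map ι) (Q₀.map ι) RatFunc.X)
      (bezoutian (P₁.map ι) (Q₁.map ι) RatFunc.X) k m ≠ 0 := by
  intro ι
  have hX := map_resultant_bezoutian (algebraMap K[X] (RatFunc K)) (P₀.map C) (Q₀.map C)
    (P₁.map C) (Q₁.map C) X k m
  have ht := map_resultant_bezoutian (evalRingHom t) (P₀.map C) (Q₀.map C)
    (P₁.map C) (Q₁.map C) X k m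
  have hι (P : K[X]) : (P.map C).map (algebraMap K[X] (RatFunc K)) = P.map ι := by
    rw [Polynomial.map_map]
    congr 1
  have hid (P : K[X]) : (P.map C).map (evalRingHom t) = P := by
    ext
    simp
  rw [hι, hι, hι, hι, RatFunc.algebraMap_X] at hX
  rw [hid, hid, hid, hid, coe_evalRingHom, eval_X] at ht
  rw [← hX]
  refine RatFunc.algebraMap_ne_zero fun h0 => h ?_
  rw [← ht, h0, eval_zero]

open IntermediateField in
theorem adjoin_div_div_eq_top (hP₀ : P₀.natDegree ≤ n) (hQ₀ : Q₀.natDegree ≤ n)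
    (hP₁ : P₁.natDegree ≤ m) (hQ₁ : Q₁.natDegree ≤ m) (hm : m ≠ 0) (hQ₀0 : Q₀ ≠ 0) (hQ₁0 : Q₁ ≠ 0)
    {t : K} (hres : resultant (bezoutian P₀ Q₀ t) (bezoutian P₁ Q₁ t) (n - 1) m ≠ 0) :
    K⟮algebraMap K[X] (RatFunc K) P₀ / algebraMap K[X] (RatFunc K) Q₀,
      algebraMap K[X] (RatFunc K) P₁ / algebraMap K[X] (RatFunc K) Q₁⟯ = ⊤ := by
  simp only [← RatFunc.aeval_X_left_eq_algebraMap]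
  set N := K⟮aeval (RatFunc.X : RatFunc K) P₀ / aeval RatFunc.X Q₀,
    aeval (RatFunc.X : RatFunc K) P₁ / aeval RatFunc.X Q₁⟯
  have hmap (P Q : K[X]) (z : N) :
      (fiberPoly P Q z).map (algebraMap N (RatFunc K)) = fiberPoly P Q (z : RatFunc K) :=
    map_fiberPoly P Q N.val z
  have hcop := isCoprime_of_resultant_ne_zero
    (natDegree_bezoutian_le (natDegree_map_le.trans hP₀) (natDegree_map_le.trans hQ₀) _)
    ((natDegree_bezoutian_le (natDegree_map_le.trans hP₁) (natDegree_map_le.trans hQ₁) _).trans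
      (Nat.sub_le m 1)) (.inr hm) (resultant_bezoutian_X_ne_zero hres)
  have hx : aeval (RatFunc.X : RatFunc K) P₀ / aeval RatFunc.X Q₀ ∈ N :=
    subset_adjoin _ _ (by simp)
  have hy : aeval (RatFunc.X : RatFunc K) P₁ / aeval RatFunc.X Q₁ ∈ N :=
    subset_adjoin _ _ (by simp)
  rw [eq_top_iff, ← RatFunc.adjoin_X, adjoin_simple_le_iff]
  obtain ⟨z, hz⟩ := mem_range_algebraMap_of_isCoprime (K := N) (t := (RatFunc.X : RatFunc K))
    (A := fiberPoly P₀ Q₀ (⟨_, hx⟩ : N)) (B := fiberPoly P₁ Q₁ (⟨_, hy⟩ : N))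
    (by rw [← eval_map_algebraMap, hmap]; exact eval_fiberPoly_div P₀ (aeval_ratFuncX_ne_zero hQ₀0))
    (by rw [← eval_map_algebraMap, hmap]; exact eval_fiberPoly_div P₁ (aeval_ratFuncX_ne_zero hQ₁0))
    (by rw [hmap]; exact fiberPoly_div_dvd P₀ (aeval_ratFuncX_ne_zero hQ₀0))
    (by rw [hmap]; exact fiberPoly_div_dvd P₁ (aeval_ratFuncX_ne_zero hQ₁0)) hcop
  exact hz ▸ z.2

end Properness

section ImplicitResultant

/-- The resultant in `t` of `P₀ - x Q₀` and `P₁ - y Q₁`, taken as polynomials in `t` of nominal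
degrees `n` and `m`. It is a polynomial in the outer variable `y` whose coefficients are polynomials
in the inner variable `x`, and it vanishes on the curve `(P₀ / Q₀, P₁ / Q₁)`. -/
noncomputable def implicitResultant {K : Type*} [CommRing K] (P₀ Q₀ P₁ Q₁ : K[X]) (n m : ℕ) :
    K[X][X] :=
  resultant (fiberPoly P₀ Q₀ (C X : K[X][X])) (fiberPoly P₁ Q₁ (X : K[X][X])) n m

theorem map_implicitResultant {K S : Type*} [CommRing K] [CommRing S] [Algebra K S]
    (θ : K[X][X] →ₐ[K] S) (P₀ Q₀ P₁ Q₁ : K[X]) (n m : ℕ) :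
    θ (implicitResultant P₀ Q₀ P₁ Q₁ n m) =
      resultant (fiberPoly P₀ Q₀ (θ (C X))) (fiberPoly P₁ Q₁ (θ X)) n m := by
  rw [← map_fiberPoly, ← map_fiberPoly, resultant_map_map]
  rfl

theorem natDegree_implicitResultant_le {K : Type*} [CommRing K] (P₀ Q₀ P₁ Q₁ : K[X]) (n m : ℕ) :
    (implicitResultant P₀ Q₀ P₁ Q₁ n m).natDegree ≤ n := by
  refine (natDegree_resultant_le (a := 0) (b := 1) (fun k => ?_) fun k => ?_).trans (by simp)
  all_goals
    simp only [coeff_fiberPoly, Polynomial.algebraMap_apply]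
    compute_degree

variable {K : Type*} [Field K] {P₀ Q₀ P₁ Q₁ : K[X]} {n m : ℕ}

theorem aevalAeval_implicitResultant (hP₀ : P₀.natDegree ≤ n) (hQ₀ : Q₀.natDegree ≤ n)
    (hP₁ : P₁.natDegree ≤ m) (hQ₁ : Q₁.natDegree ≤ m) (hnm : n ≠ 0 ∨ m ≠ 0) {L : Type*} [Field L]
    [Algebra K L] {t : L} (hQ₀t : aeval t Q₀ ≠ 0) (hQ₁t : aeval t Q₁ ≠ 0) :
    aevalAeval (aeval t P₀ / aeval t Q₀) (aeval t P₁ / aeval t Q₁)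
      (implicitResultant P₀ Q₀ P₁ Q₁ n m) = 0 := by
  rw [map_implicitResultant, aevalAeval_X, aevalAeval_Y]
  exact resultant_eq_zero_of_eval_eq_zero (natDegree_fiberPoly_le hP₀ hQ₀ _)
    (natDegree_fiberPoly_le hP₁ hQ₁ _) hnm (eval_fiberPoly_div P₀ hQ₀t) (eval_fiberPoly_div P₁ hQ₁t)

theorem map_eval_zero_implicitResultant {f : K[X]} {a d e : ℕ} (hf : f.natDegree ≤ d)
    (hP₁ : P₁.natDegree ≤ m) (hQ₁ : Q₁.natDegree ≤ m) :
    (implicitResultant (X ^ a * f) Q₀ P₁ Q₁ (a + d + e) m).map (evalRingHom 0) =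
      (-1) ^ (m * e) * (C (P₁.coeff m) - X * C (Q₁.coeff m)) ^ e *
        ((C (P₁.coeff 0) - X * C (Q₁.coeff 0)) ^ a *
          resultant (f.map C) (fiberPoly P₁ Q₁ (X : K[X])) d m) := by
  have h := map_implicitResultant (mapAlgHom (aeval (0 : K))) (X ^ a * f) Q₀ P₁ Q₁ (a + d + e) m
  rw [coe_mapAlgHom, map_C, map_X, RingHom.coe_coe, aeval_X, C_0, fiberPoly, C_0, zero_mul,
    sub_zero, algebraMap_eq, Polynomial.map_mul, Polynomial.map_pow, map_X,
    resultant_X_pow_mul a e (natDegree_map_le.trans hf) (natDegree_fiberPoly_le hP₁ hQ₁ _),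
    coeff_fiberPoly, coeff_fiberPoly, algebraMap_eq] at h
  exact h

theorem C_sub_X_mul_C_ne_zero {a b : K} (h : a ≠ 0 ∨ b ≠ 0) : C a - X * C b ≠ 0 := by
  intro h0
  have h0a : a = 0 := by simpa using congrArg (coeff · 0) h0
  have h0b : b = 0 := by simpa using congrArg (coeff · 1) h0
  simp [h0a, h0b] at h

theorem natTrailingDegree_C_sub_X_mul_C_pow [DecidableEq K] {a b : K} (h : a ≠ 0 ∨ b ≠ 0) (k : ℕ) :
    ((C a - X * C b) ^ k).natTrailingDegree = if a = 0 then k else 0 := by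
  split_ifs with ha
  · have hb : C ((-b) ^ k) ≠ 0 := C_ne_zero.mpr (pow_ne_zero _ (by simpa [ha] using h))
    rw [ha, C_0, zero_sub, ← mul_neg, ← C_neg, mul_pow, mul_comm, ← C_pow,
      natTrailingDegree_mul_X_pow hb, natTrailingDegree_C, zero_add]
  · exact natTrailingDegree_eq_zero.mpr (.inr (by simpa [coeff_zero_eq_eval_zero] using
      fun h => (ha h).elim))

theorem eval_zero_resultant_fiberPoly_X (f : K[X]) (d : ℕ) :
    (resultant (f.map C) (fiberPoly P₁ Q₁ (X : K[X])) d m).eval 0 = resultant f P₁ d m := by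
  have hf : (f.map C).map (evalRingHom (0 : K)) = f := by
    ext
    simp
  have hg : (fiberPoly P₁ Q₁ (X : K[X])).map (evalRingHom (0 : K)) = P₁ := by
    ext
    simp [coeff_fiberPoly]
  rw [← coe_evalRingHom, ← resultant_map_map, hf, hg]

theorem natTrailingDegree_map_eval_zero_implicitResultant [DecidableEq K] {f : K[X]} {a d e : ℕ}
    (hf : f.natDegree ≤ d) (hP₁ : P₁.natDegree ≤ m) (hQ₁ : Q₁.natDegree ≤ m)
    (hres : resultant f P₁ d m ≠ 0) (h0 : P₁.coeff 0 ≠ 0 ∨ Q₁.coeff 0 ≠ 0)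
    (hm : P₁.coeff m ≠ 0 ∨ Q₁.coeff m ≠ 0) :
    let r := (implicitResultant (X ^ a * f) Q₀ P₁ Q₁ (a + d + e) m).map (evalRingHom 0)
    r ≠ 0 ∧ r.natTrailingDegree =
      (if P₁.coeff 0 = 0 then a else 0) + (if P₁.coeff m = 0 then e else 0) := by
  intro r
  set W := resultant (f.map C) (fiberPoly P₁ Q₁ (X : K[X])) d m with hW
  have hW0 : W.coeff 0 ≠ 0 := by
    rwa [coeff_zero_eq_eval_zero, hW, eval_zero_resultant_fiberPoly_X]
  have hWne : W ≠ 0 := fun h => hW0 (by rw [h, coeff_zero])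
  have hr : r = (-1) ^ (m * e) * ((C (P₁.coeff m) - X * C (Q₁.coeff m)) ^ e *
      ((C (P₁.coeff 0) - X * C (Q₁.coeff 0)) ^ a * W)) := by
    rw [← mul_assoc]
    exact map_eval_zero_implicitResultant hf hP₁ hQ₁
  have hA := pow_ne_zero e (C_sub_X_mul_C_ne_zero hm)
  have hB := pow_ne_zero a (C_sub_X_mul_C_ne_zero h0)
  have hsign (p : K[X]) (k : ℕ) : ((-1) ^ k * p).natTrailingDegree = p.natTrailingDegree := by
    obtain h | h := neg_one_pow_eq_or K[X] k <;> simp [h]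
  refine ⟨?_, ?_⟩
  · rw [hr]
    exact mul_ne_zero (by simp) (mul_ne_zero hA (mul_ne_zero hB hWne))
  · rw [hr, hsign, natTrailingDegree_mul hA (mul_ne_zero hB hWne), natTrailingDegree_mul hB hWne,
      natTrailingDegree_C_sub_X_mul_C_pow hm, natTrailingDegree_C_sub_X_mul_C_pow h0,
      natTrailingDegree_eq_zero.mpr (.inr hW0)]
    ring

end ImplicitResultant

section IrreducibleEquation

open IntermediateField in
theorem transcendental_of_finrank_adjoin_ne_zero {K : Type*} [Field K] {x : RatFunc K}
    (h : Module.finrank K⟮x⟯ (RatFunc K) ≠ 0) : Transcendental K x := by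
  refine RatFunc.transcendental_of_ne_C x fun hx => h ?_
  obtain ⟨hnum, hdenom⟩ := (RatFunc.eq_C_iff x).mp hx
  rw [RatFunc.finrank_eq_max_natDegree, hnum, hdenom, max_self]

variable {K : Type*} [Field K] {P₀ Q₀ P₁ Q₁ : K[X]} {n m : ℕ}

theorem exists_implicitResultant_eq_mul_C
    (hn : n ≠ 0) (hdeg : max P₀.natDegree Q₀.natDegree = n) (hP₁ : P₁.natDegree ≤ m)
    (hQ₁ : Q₁.natDegree ≤ m) (hm : m ≠ 0) (hP₀0 : P₀ ≠ 0) (hQ₀0 : Q₀ ≠ 0) (hQ₁0 : Q₁ ≠ 0)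
    (hcop : IsCoprime P₀ Q₀) {t : K}
    (hbez : resultant (bezoutian P₀ Q₀ t) (bezoutian P₁ Q₁ t) (n - 1) m ≠ 0)
    (hne : implicitResultant P₀ Q₀ P₁ Q₁ n m ≠ 0) {Φ : K[X][X]} (hΦ : Irreducible Φ)
    (h : aevalAeval (algebraMap K[X] (RatFunc K) P₀ / algebraMap K[X] (RatFunc K) Q₀)
      (algebraMap K[X] (RatFunc K) P₁ / algebraMap K[X] (RatFunc K) Q₁) Φ = 0) :
    ∃ c : K[X], implicitResultant P₀ Q₀ P₁ Q₁ n m = Φ * C c := by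
  have hP₀ : P₀.natDegree ≤ n := hdeg ▸ le_max_left _ _
  have hQ₀ : Q₀.natDegree ≤ n := hdeg ▸ le_max_right _ _
  have hfinrank := (finrank_adjoin_div hP₀0 hQ₀0 hcop).trans hdeg
  have htrans := transcendental_of_finrank_adjoin_ne_zero (hfinrank.trans_ne hn)
  have hroot := aevalAeval_implicitResultant hP₀ hQ₀ hP₁ hQ₁ (.inl hn)
    (aeval_ratFuncX_ne_zero hQ₀0) (aeval_ratFuncX_ne_zero hQ₁0)
  simp only [RatFunc.aeval_X_left_eq_algebraMap] at hroot
  obtain ⟨H, hH⟩ := dvd_of_irreducible_of_aevalAeval_eq_zero htrans hΦ h hroot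
  have hΦdeg : n ≤ Φ.natDegree := hfinrank ▸ finrank_adjoin_le_natDegree htrans
    (adjoin_div_div_eq_top hP₀ hQ₀ hP₁ hQ₁ hm hQ₀0 hQ₁0 hbez) hΦ.ne_zero h
  have hHdeg : H.natDegree = 0 := by
    have hle := natDegree_implicitResultant_le P₀ Q₀ P₁ Q₁ n m
    rw [hH, natDegree_mul hΦ.ne_zero (right_ne_zero_of_mul (hH ▸ hne))] at hle
    omega
  exact ⟨H.coeff 0, by rw [hH, ← eq_C_of_natDegree_eq_zero hHdeg]⟩

theorem natTrailingDegree_map_eval_zero_of_irreducible [DecidableEq K] {f : K[X]} {a d e : ℕ}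
    (hdeg : max (X ^ a * f).natDegree Q₀.natDegree = n)
    (hn : a + d + e = n) (hn0 : n ≠ 0) (hm0 : m ≠ 0) (hf : f.natDegree ≤ d)
    (hP₁ : P₁.natDegree ≤ m) (hQ₁ : Q₁.natDegree ≤ m)
    (hf0 : f ≠ 0) (hQ₀0 : Q₀ ≠ 0) (hQ₁0 : Q₁ ≠ 0)
    (hcop : IsCoprime (X ^ a * f) Q₀) {t : K}
    (hbez : resultant (bezoutian (X ^ a * f) Q₀ t) (bezoutian P₁ Q₁ t) (n - 1) m ≠ 0)
    (hres : resultant f P₁ d m ≠ 0) (h0 : P₁.coeff 0 ≠ 0 ∨ Q₁.coeff 0 ≠ 0)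
    (hm : P₁.coeff m ≠ 0 ∨ Q₁.coeff m ≠ 0) {Φ : K[X][X]} (hΦ : Irreducible Φ)
    (h : aevalAeval (algebraMap K[X] (RatFunc K) (X ^ a * f) / algebraMap K[X] (RatFunc K) Q₀)
      (algebraMap K[X] (RatFunc K) P₁ / algebraMap K[X] (RatFunc K) Q₁) Φ = 0) :
    let r := Φ.map (evalRingHom 0)
    r ≠ 0 ∧ r.natTrailingDegree =
      (if P₁.coeff 0 = 0 then a else 0) + (if P₁.coeff m = 0 then e else 0) := by
  subst hn
  obtain ⟨hr, hdeg0⟩ := natTrailingDegree_map_eval_zero_implicitResultant (Q₀ := Q₀) (a := a)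
    (e := e) hf hP₁ hQ₁ hres h0 hm
  obtain ⟨c, hc⟩ := exists_implicitResultant_eq_mul_C hn0 hdeg hP₁ hQ₁ hm0
    (mul_ne_zero (pow_ne_zero _ X_ne_zero) hf0) hQ₀0 hQ₁0 hcop hbez
    (fun h => hr (by rw [h, Polynomial.map_zero])) hΦ h
  rw [hc, Polynomial.map_mul, map_C] at hr hdeg0
  have hΦ0 := left_ne_zero_of_mul hr
  refine ⟨hΦ0, ?_⟩
  rwa [natTrailingDegree_mul hΦ0 (right_ne_zero_of_mul hr), natTrailingDegree_C] at hdeg0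

end IrreducibleEquation

section Bivariate

variable {K : Type*} [CommSemiring K]

theorem aevalAeval_equivMvPolynomial_symm {L : Type*} [CommSemiring L] [Algebra K L] (x y : L)
    (φ : MvPolynomial (Fin 2) K) :
    aevalAeval x y ((Bivariate.equivMvPolynomial K).symm φ) = MvPolynomial.aeval ![x, y] φ := by
  have h : (aevalAeval x y).comp ((Bivariate.equivMvPolynomial K).symm : _ →ₐ[K] K[X][X]) =
      MvPolynomial.aeval ![x, y] := by
    ext i
    fin_cases i <;> simp
  exact DFunLike.congr_fun h φ

theorem coeff_map_eval_zero_equivMvPolynomial_symm (φ : MvPolynomial (Fin 2) K) (j : ℕ) :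
    (((Bivariate.equivMvPolynomial K).symm φ).map (evalRingHom 0)).coeff j =
      φ.coeff (Finsupp.single 1 j) := by
  induction φ using MvPolynomial.induction_on' with
  | add p q hp hq => simp [hp, hq]
  | monomial u a =>
    have hu : u = Finsupp.single 1 j ↔ u 0 = 0 ∧ j = u 1 := by
      simp [Finsupp.ext_iff, Fin.forall_fin_two, eq_comm]
    have hmon : (Bivariate.equivMvPolynomial K).symm (MvPolynomial.monomial u a) =
        C (C a * X ^ u 0) * X ^ u 1 := by
      simp [MvPolynomial.monomial_eq, Finsupp.prod_fintype, mul_assoc]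
    rw [hmon, MvPolynomial.coeff_monomial, if_congr hu rfl rfl]
    by_cases h0 : u 0 = 0 <;> simp [h0, coeff_X_pow]

theorem isLeast_natTrailingDegree {R : Type*} [Semiring R] {p : R[X]} (hp : p ≠ 0) :
    IsLeast {j | p.coeff j ≠ 0} p.natTrailingDegree :=
  ⟨trailingCoeff_nonzero_iff_nonzero.mpr hp, fun _ => natTrailingDegree_le_of_ne_zero⟩

end Bivariate

section Generic

/-- A property of coefficient vectors holds generically if it holds off the zero locus of some
nonzero polynomial in the coefficients. -/
def HoldsGenerically {σ K : Type*} [CommSemiring K] (p : (σ → K) → Prop) : Prop :=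
  ∃ G : MvPolynomial σ K, G ≠ 0 ∧ ∀ c, MvPolynomial.eval c G ≠ 0 → p c

namespace HoldsGenerically

variable {σ K : Type*} [CommRing K] {p q : (σ → K) → Prop}

theorem mono (hp : HoldsGenerically p) (h : ∀ c, p c → q c) : HoldsGenerically q :=
  let ⟨G, hG, hp⟩ := hp
  ⟨G, hG, fun c hc => h c (hp c hc)⟩

theorem of_aeval_ne_zero {A : Type*} [CommRing A] [Algebra K A] {G : MvPolynomial σ K} {x : σ → A}
    (hx : MvPolynomial.aeval x G ≠ 0) : HoldsGenerically fun c => MvPolynomial.eval c G ≠ 0 :=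
  ⟨G, fun h => hx (by rw [h, map_zero]), fun _ => id⟩

variable [IsDomain K]

theorem ball {ι : Type*} {s : Finset ι} {p : ι → (σ → K) → Prop}
    (h : ∀ i ∈ s, HoldsGenerically (p i)) : HoldsGenerically fun c => ∀ i ∈ s, p i c := by
  choose! G hG hp using h
  refine ⟨∏ i ∈ s, G i, Finset.prod_ne_zero_iff.mpr hG, fun c hc i hi => hp i hi c ?_⟩
  rw [map_prod] at hc
  exact Finset.prod_ne_zero_iff.mp hc i hi

theorem and (hp : HoldsGenerically p) (hq : HoldsGenerically q) :
    HoldsGenerically fun c => p c ∧ q c := by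
  obtain ⟨G, hG, hp⟩ := hp
  obtain ⟨H, hH, hq⟩ := hq
  refine ⟨G * H, mul_ne_zero hG hH, fun c hc => ?_⟩
  rw [map_mul] at hc
  exact ⟨hp c (left_ne_zero_of_mul hc), hq c (right_ne_zero_of_mul hc)⟩

theorem exists_of_infinite [Infinite K] (hp : HoldsGenerically p) : ∃ c, p c := by
  obtain ⟨G, hG, hp⟩ := hp
  by_contra! h
  exact hG (MvPolynomial.funext fun c => by
    rw [map_zero]
    exact not_not.mp (mt (hp c) (h c)))

theorem forall_ne_zero [Finite σ] : HoldsGenerically fun c : σ → K => ∀ v, c v ≠ 0 := by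
  cases nonempty_fintype σ
  refine (ball (s := Finset.univ) (p := fun v c => c v ≠ 0) fun v _ => ?_).mono
    fun _ h v => h v (Finset.mem_univ v)
  exact ⟨MvPolynomial.X v, MvPolynomial.X_ne_zero v, fun c hc => by
    rwa [MvPolynomial.eval_X] at hc⟩

end HoldsGenerically

end Generic

section Sparse

/-- The univariate polynomial with exponents `e` and coefficients `c`. -/
noncomputable def sparsePoly {ι R : Type*} [Fintype ι] [Semiring R] (e : ι → ℕ) (c : ι → R) :
    R[X] :=
  ∑ i, C (c i) * X ^ e i

variable {ι R : Type*} [Fintype ι] [CommRing R] {e : ι → ℕ}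

theorem map_sparsePoly {S : Type*} [CommRing S] (f : R →+* S) (e : ι → ℕ) (c : ι → R) :
    (sparsePoly e c).map f = sparsePoly e (f ∘ c) := by
  simp [sparsePoly, Polynomial.map_sum]

theorem coeff_sparsePoly (e : ι → ℕ) (c : ι → R) (k : ℕ) :
    (sparsePoly e c).coeff k = ∑ i, if k = e i then c i else 0 := by
  simp [sparsePoly, coeff_X_pow]

theorem coeff_sparsePoly_apply (he : Function.Injective e) (c : ι → R) (i : ι) :
    (sparsePoly e c).coeff (e i) = c i := by
  classical simp [coeff_sparsePoly, he.eq_iff]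

theorem coeff_sparsePoly_eq_zero (c : ι → R) {k : ℕ} (hk : ∀ i, e i ≠ k) :
    (sparsePoly e c).coeff k = 0 := by
  simp [coeff_sparsePoly, fun i => (hk i).symm]

theorem natDegree_sparsePoly_le {n : ℕ} (he : ∀ i, e i ≤ n) (c : ι → R) :
    (sparsePoly e c).natDegree ≤ n :=
  natDegree_sum_le_of_forall_le _ _ fun i _ => (natDegree_C_mul_X_pow_le _ _).trans (he i)

theorem X_pow_mul_sparsePoly_sub {a : ℕ} (he : ∀ i, a ≤ e i) (c : ι → R) :
    X ^ a * sparsePoly (fun i => e i - a) c = sparsePoly e c := by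
  simp only [sparsePoly, Finset.mul_sum]
  refine Finset.sum_congr rfl fun i _ => ?_
  rw [mul_left_comm, ← pow_add, Nat.add_sub_cancel' (he i)]

theorem coeff_sparsePoly_val_eq_zero_iff {S : Finset ℕ} {c : S → R} (hc : ∀ s, c s ≠ 0) {k : ℕ} :
    (sparsePoly (↑) c).coeff k = 0 ↔ k ∉ S := by
  by_cases hk : k ∈ S
  · rw [show (sparsePoly (↑) c).coeff k = c ⟨k, hk⟩ from
      coeff_sparsePoly_apply Subtype.val_injective c ⟨k, hk⟩]
    simp [hk, hc]
  · simpa [hk] using coeff_sparsePoly_eq_zero c fun s (hs : (s : ℕ) = k) => hk (hs ▸ s.2)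

end Sparse

section GeomSum

theorem exists_forall_geom_sum_eq_zero_iff_dvd {K : Type*} [Field K] (x : K) :
    ∃ d, ∀ n, ∑ k ∈ Finset.range n, x ^ k = 0 ↔ d ∣ n := by
  by_cases hx : x = 1
  · exact ⟨ringChar K, fun n => by simp [hx, ringChar.spec]⟩
  · refine ⟨orderOf x, fun n => ?_⟩
    rw [geom_sum_eq hx, div_eq_zero_iff, or_iff_left (sub_ne_zero.mpr hx), sub_eq_zero,
      orderOf_dvd_iff_pow_eq_one]

theorem exists_geom_sum_ne_zero_of_gcd_eq_one {K : Type*} [Field K] {A : Finset ℕ}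
    (hA : A.gcd id = 1) (x : K) : ∃ n ∈ A, ∑ k ∈ Finset.range n, x ^ k ≠ 0 := by
  obtain ⟨d, hd⟩ := exists_forall_geom_sum_eq_zero_iff_dvd x
  by_contra! h
  have hd1 : d ∣ 1 := hA ▸ Finset.dvd_gcd fun n hn => (hd n).mp (h n hn)
  simpa using (hd 1).mpr hd1

end GeomSum

theorem exists_ne_of_mem_union {α β : Type*} [DecidableEq α] {S T : Finset α}
    (hS : S.Nonempty) (hT : T.Nonempty) {l : α → β} {a b : α} (ha : a ∈ S ∪ T) (hb : b ∈ S ∪ T)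
    (hab : l a ≠ l b) : ∃ (i : S) (j : T), l i ≠ l j := by
  obtain ⟨s, hs⟩ := hS
  obtain ⟨t, ht⟩ := hT
  by_contra! h
  have hc : ∀ x ∈ S ∪ T, l x = l t := fun x hx => (Finset.mem_union.mp hx).elim
    (fun hx => h ⟨x, hx⟩ ⟨t, ht⟩) fun hx => (h ⟨s, hs⟩ ⟨x, hx⟩).symm.trans (h ⟨s, hs⟩ ⟨t, ht⟩)
  exact hab ((hc a ha).trans (hc b hb).symm)

section SparseBezoutian

theorem bezoutian_sparsePoly_one {ι κ R : Type*} [Fintype ι] [Fintype κ] [CommRing R]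
    (e : ι → ℕ) (e' : κ → ℕ) (p : ι → R) (q : κ → R) :
    bezoutian (sparsePoly e p) (sparsePoly e' q) 1 = ∑ i, ∑ j, (p i * q j) •
      (∑ k ∈ Finset.range (e i), X ^ k - ∑ k ∈ Finset.range (e' j), X ^ k) := by
  have hgeom (a b : ℕ) : (X - C (1 : R)) * (∑ k ∈ Finset.range a, X ^ k -
      ∑ k ∈ Finset.range b, X ^ k) = X ^ a - X ^ b := by
    rw [mul_sub, C_1, mul_geom_sum, mul_geom_sum, sub_sub_sub_cancel_right]
  refine (monic_X_sub_C (1 : R)).isRegular.left ?_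
  beta_reduce
  rw [X_sub_C_mul_bezoutian]
  simp only [Finset.mul_sum, mul_smul_comm, hgeom]
  simp only [smul_sub, Finset.sum_sub_distrib, sparsePoly, eval_finsetSum, eval_C_mul, eval_X_pow,
    one_pow, mul_one, map_sum, Finset.sum_mul_sum, smul_eq_C_mul, C_mul, mul_assoc]
  rw [Finset.sum_comm]
  simp only [mul_left_comm]

variable {K : Type*} [Field K]

theorem holdsGenerically_bezoutian_sparsePoly_one {ι κ : Type*} [Fintype ι] [Fintype κ]
    {e : ι → ℕ} {e' : κ → ℕ} (l : K[X] →ₗ[K] K)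
    (h : ∃ i j, l (∑ k ∈ Finset.range (e i), X ^ k) ≠ l (∑ k ∈ Finset.range (e' j), X ^ k)) :
    HoldsGenerically fun c : ι ⊕ κ → K =>
      l (bezoutian (sparsePoly e (c ∘ .inl)) (sparsePoly e' (c ∘ .inr)) 1) ≠ 0 := by
  classical
  obtain ⟨i₀, j₀, h⟩ := h
  let w (i : ι) (j : κ) : K :=
    l (∑ k ∈ Finset.range (e i), X ^ k) - l (∑ k ∈ Finset.range (e' j), X ^ k)
  let G : MvPolynomial (ι ⊕ κ) K := ∑ i, ∑ j,
    MvPolynomial.X (.inl i) * MvPolynomial.X (.inr j) * MvPolynomial.C (w i j)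
  have hG : MvPolynomial.aeval (Sum.elim (Pi.single i₀ 1) (Pi.single j₀ 1)) G ≠ (0 : K) := by
    simpa [G, Pi.single_apply, w, sub_eq_zero] using h
  refine (HoldsGenerically.of_aeval_ne_zero hG).mono fun c hc => ?_
  simpa [G, w, bezoutian_sparsePoly_one] using hc

-- With `[s] = 1 + X + ⋯ + X ^ (s - 1)`, choose the first pair so that its Bézoutian misses every
-- root of `[m]` at which some `[s]` with `s ∈ S₀ ∪ T₀` is nonzero. At each root of this Bézoutian
-- some `[s]` with `s ∈ S₁ ∪ T₁` is then nonzero, so a generic second pair misses all these roots.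
theorem exists_isCoprime_bezoutian_one [IsAlgClosed K] {S₀ T₀ S₁ T₁ : Finset ℕ}
    (hS₀ : S₀.Nonempty) (hT₀ : T₀.Nonempty) (hS₁ : S₁.Nonempty) (hT₁ : T₁.Nonempty)
    (h₀ : 0 ∈ S₀ ∪ T₀) (h₁ : 0 ∈ S₁ ∪ T₁) {n m : ℕ} (hn : n ∈ S₀ ∪ T₀) (hm : m ∈ S₁ ∪ T₁)
    (hn0 : n ≠ 0) (hm0 : m ≠ 0)
    (hgcd : ∀ x : K, ∃ s ∈ S₀ ∪ T₀ ∪ (S₁ ∪ T₁), ∑ k ∈ Finset.range s, x ^ k ≠ 0) :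
    ∃ (p₀ : S₀ → K) (q₀ : T₀ → K) (p₁ : S₁ → K) (q₁ : T₁ → K),
      (bezoutian (sparsePoly (↑) p₀) (sparsePoly (↑) q₀) 1).coeff (n - 1) ≠ 0 ∧
      IsCoprime (bezoutian (sparsePoly (↑) p₀) (sparsePoly (↑) q₀) 1)
        (bezoutian (sparsePoly (↑) p₁) (sparsePoly (↑) q₁) 1) := by
  classical
  have hgen {S T : Finset ℕ} (hS : S.Nonempty) (hT : T.Nonempty) (h : 0 ∈ S ∪ T)
      (l : K[X] →ₗ[K] K) {s : ℕ} (hs : s ∈ S ∪ T) (hl : l (∑ k ∈ Finset.range s, X ^ k) ≠ 0) :=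
    holdsGenerically_bezoutian_sparsePoly_one l (exists_ne_of_mem_union hS hT
      (l := fun s => l (∑ k ∈ Finset.range s, X ^ k)) hs h (by simpa using hl))
  have hroot {S T : Finset ℕ} (hS : S.Nonempty) (hT : T.Nonempty) (h : 0 ∈ S ∪ T) (x : K)
      (hx : ∃ s ∈ S ∪ T, ∑ k ∈ Finset.range s, x ^ k ≠ 0) :=
    let ⟨_, hs, hx⟩ := hx
    hgen hS hT h (aeval x).toLinearMap hs (by simpa using hx)
  have hgeom : (∑ k ∈ Finset.range m, X ^ k : K[X]) ≠ 0 := fun h => by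
    simpa [coeff_X_pow, hm0] using congr_arg (coeff · 0) h
  let A := ((∑ k ∈ Finset.range m, X ^ k : K[X]).roots.toFinset).filter
    fun x => ∃ s ∈ S₀ ∪ T₀, ∑ k ∈ Finset.range s, x ^ k ≠ 0
  obtain ⟨c, hcoeff, hA⟩ := ((hgen hS₀ hT₀ h₀ (lcoeff K (n - 1)) hn
    (by simp [coeff_X_pow, Nat.pos_of_ne_zero hn0])).and (.ball fun x (hx : x ∈ A) =>
      hroot hS₀ hT₀ h₀ x (Finset.mem_filter.mp hx).2)).exists_of_infinite
  let B := bezoutian (sparsePoly (↑) (c ∘ .inl)) (sparsePoly (↑) (c ∘ .inr)) 1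
  have hB : B ≠ 0 := fun h => hcoeff (by simp [B, h])
  obtain ⟨c', hc'⟩ := (HoldsGenerically.ball (s := B.roots.toFinset) fun x hx =>
    hroot hS₁ hT₁ h₁ x (by
      by_contra! h
      obtain ⟨s, hs, hne⟩ := hgcd x
      have hs₀ : s ∈ S₀ ∪ T₀ := (Finset.mem_union.mp hs).resolve_right fun hs => hne (h s hs)
      refine hA x (Finset.mem_filter.mpr ⟨?_, s, hs₀, hne⟩) (by simpa [hB] using hx)
      rw [Multiset.mem_toFinset, mem_roots hgeom, IsRoot.def]
      simpa [eval_finsetSum] using h m hm)).exists_of_infinite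
  refine ⟨_, _, c' ∘ .inl, c' ∘ .inr, hcoeff,
    (isCoprime_iff_aeval_ne_zero_of_isAlgClosed K K _ _).mpr fun x => or_iff_not_imp_left.mpr
      fun hx => hc' x (by simpa [hB] using hx)⟩

end SparseBezoutian

section Parametrization

variable {ι R : Type*} [CommRing R] {S : ι → Finset ℕ}

/-- The `i`-th polynomial of a family with prescribed supports `S` and joint coefficient
vector `c`. -/
noncomputable def paramPoly (c : (Σ i, S i) → R) (i : ι) : R[X] :=
  sparsePoly Subtype.val fun s : S i => c ⟨i, s⟩

theorem map_paramPoly {R' : Type*} [CommRing R'] (f : R →+* R') (c : (Σ i, S i) → R) (i : ι) :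
    (paramPoly c i).map f = paramPoly (f ∘ c) i :=
  map_sparsePoly f _ _

theorem natDegree_paramPoly_le {i : ι} {n : ℕ} (hn : ∀ s ∈ S i, s ≤ n) (c : (Σ i, S i) → R) :
    (paramPoly c i).natDegree ≤ n :=
  natDegree_sparsePoly_le (fun s : S i => hn s s.2) _

theorem coeff_paramPoly_eq_zero_iff {c : (Σ i, S i) → R} (hc : ∀ v, c v ≠ 0) {i : ι} {k : ℕ} :
    (paramPoly c i).coeff k = 0 ↔ k ∉ S i :=
  coeff_sparsePoly_val_eq_zero_iff fun s => hc ⟨i, s⟩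

theorem coeff_paramPoly_ne_zero_or {c : (Σ i, S i) → R} (hc : ∀ v, c v ≠ 0) {i j : ι} {k : ℕ}
    (hk : k ∈ S i ∪ S j) : (paramPoly c i).coeff k ≠ 0 ∨ (paramPoly c j).coeff k ≠ 0 := by
  simpa [coeff_paramPoly_eq_zero_iff hc] using hk

theorem paramPoly_ne_zero {c : (Σ i, S i) → R} (hc : ∀ v, c v ≠ 0) {i : ι} (hS : (S i).Nonempty) :
    paramPoly c i ≠ 0 := by
  obtain ⟨s, hs⟩ := hS
  intro h
  exact (coeff_paramPoly_eq_zero_iff hc).not.mpr (not_not.mpr hs) (by rw [h, coeff_zero])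

/-- The cofactor of `X ^ min S i` in the `i`-th polynomial of the family. -/
noncomputable def reducedParamPoly (c : (Σ i, S i) → R) {i : ι} (hS : (S i).Nonempty) : R[X] :=
  sparsePoly (fun s : S i => (s : ℕ) - (S i).min' hS) fun s => c ⟨i, s⟩

variable {i : ι} (hS : (S i).Nonempty)

theorem X_pow_mul_reducedParamPoly (c : (Σ i, S i) → R) :
    X ^ (S i).min' hS * reducedParamPoly c hS = paramPoly c i :=
  X_pow_mul_sparsePoly_sub (fun s : S i => (S i).min'_le s s.2) _

theorem natDegree_reducedParamPoly_le (c : (Σ i, S i) → R) :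
    (reducedParamPoly c hS).natDegree ≤ (S i).max' hS - (S i).min' hS :=
  natDegree_sparsePoly_le (fun s : S i => Nat.sub_le_sub_right ((S i).le_max' s s.2) _) _

theorem map_reducedParamPoly {R' : Type*} [CommRing R'] (f : R →+* R') (c : (Σ i, S i) → R) :
    (reducedParamPoly c hS).map f = reducedParamPoly (f ∘ c) hS :=
  map_sparsePoly f _ _

theorem coeff_reducedParamPoly_sub (c : (Σ i, S i) → R) (s : S i) :
    (reducedParamPoly c hS).coeff (s - (S i).min' hS) = c ⟨i, s⟩ :=
  coeff_sparsePoly_apply (e := fun s : S i => (s : ℕ) - (S i).min' hS) (fun s t h => Subtype.ext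
    (tsub_left_inj ((S i).min'_le s s.2) ((S i).min'_le t t.2) |>.mp h)) _ s

end Parametrization

section GenericResultant

variable {K : Type*} [Field K]

theorem isCoprime_X_pow_mul_of_resultant_ne_zero {f Q : K[X]} {a d n : ℕ} (hf : f.natDegree ≤ d)
    (hQ : Q.natDegree ≤ n) (hn : n ≠ 0) (h : resultant f Q d n ≠ 0) (hQ0 : a = 0 ∨ Q.coeff 0 ≠ 0) :
    IsCoprime (X ^ a * f) Q := by
  refine .mul_left ?_ (isCoprime_of_resultant_ne_zero hf hQ (.inr hn) h)
  rcases hQ0 with rfl | hQ0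
  · simpa using isCoprime_one_left
  · exact (prime_X.coprime_iff_not_dvd.mpr (mt X_dvd_iff.mp hQ0)).pow_left

theorem max_natDegree_eq {P Q : K[X]} {n : ℕ} (hP : P.natDegree ≤ n) (hQ : Q.natDegree ≤ n)
    (h : P.coeff n ≠ 0 ∨ Q.coeff n ≠ 0) : max P.natDegree Q.natDegree = n :=
  (max_le hP hQ).antisymm (le_max_iff.mpr (h.imp le_natDegree_of_ne_zero le_natDegree_of_ne_zero))

theorem holdsGenerically_resultant_reducedParamPoly_ne_zero {ι : Type*} {S : ι → Finset ℕ}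
    {i j : ι} (hij : i ≠ j) (hi : (S i).Nonempty) (hj : (S j).Nonempty) {m : ℕ}
    (hm : ∀ s ∈ S j, s ≤ m) :
    HoldsGenerically fun c : (Σ i, S i) → K =>
      resultant (reducedParamPoly c hi) (paramPoly c j)
        ((S i).max' hi - (S i).min' hi) m ≠ 0 := by
  classical
  set d := (S i).max' hi - (S i).min' hi
  obtain ⟨t, ht⟩ := hj
  let x : (Σ i, S i) → K := Function.extend (Sigma.mk j) (Pi.single ⟨t, ht⟩ 1) 1
  have hf (s : S i) : (reducedParamPoly x hi).coeff (s - (S i).min' hi) = 1 := by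
    rw [coeff_reducedParamPoly_sub]
    exact Function.extend_apply' _ _ _ fun ⟨_, h⟩ => hij (congr_arg Sigma.fst h).symm
  have hP : paramPoly x j = X ^ t := by
    simp [paramPoly, x, sparsePoly, sigma_mk_injective.extend_apply, Pi.single_apply]
  have h0 : (reducedParamPoly x hi).coeff 0 ≠ 0 := by
    have := hf ⟨_, (S i).min'_mem hi⟩
    rw [Nat.sub_self] at this
    exact this ▸ one_ne_zero
  have hdeg : (reducedParamPoly x hi).natDegree = d :=
    (natDegree_reducedParamPoly_le hi x).antisymm (le_natDegree_of_ne_zero (by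
      rw [hf ⟨_, (S i).max'_mem hi⟩]
      exact one_ne_zero))
  have hx : resultant (reducedParamPoly x hi) (paramPoly x j) d m ≠ 0 := by
    rw [hP, ← hdeg]
    refine resultant_ne_zero_of_isCoprime (fun h => h0 (by rw [h, coeff_zero]))
      ((natDegree_X_pow t).trans_le (hm t ht)) ?_
    exact (prime_X.coprime_iff_not_dvd.mpr (mt X_dvd_iff.mp h0)).symm.pow_right
  have hG (c : (Σ i, S i) → K) : MvPolynomial.eval c (resultant
      (reducedParamPoly MvPolynomial.X hi) (paramPoly MvPolynomial.X j) d m) =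
      resultant (reducedParamPoly c hi) (paramPoly c j) d m := by
    rw [← resultant_map_map, map_reducedParamPoly, map_paramPoly]
    have hX : MvPolynomial.eval c ∘ MvPolynomial.X = c := funext MvPolynomial.eval_X
    rw [hX]
  refine ⟨_, fun h => hx ?_, fun c hc => by rwa [hG] at hc⟩
  rw [← hG, h, map_zero]

theorem map_resultant_bezoutian_paramPoly {S : Fin 4 → Finset ℕ} {A B : Type*} [CommRing A]
    [CommRing B] (f : A →+* B) (c : (Σ i, S i) → A) (k m : ℕ) :
    f (resultant (bezoutian (paramPoly c 0) (paramPoly c 1) 1)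
      (bezoutian (paramPoly c 2) (paramPoly c 3) 1) k m) =
    resultant (bezoutian (paramPoly (f ∘ c) 0) (paramPoly (f ∘ c) 1) 1)
      (bezoutian (paramPoly (f ∘ c) 2) (paramPoly (f ∘ c) 3) 1) k m := by
  rw [map_resultant_bezoutian, map_paramPoly, map_paramPoly, map_paramPoly, map_paramPoly, map_one]

theorem holdsGenerically_resultant_bezoutian_of_ne_zero {S : Fin 4 → Finset ℕ} {k m : ℕ}
    {A : Type*} [CommRing A] [Algebra K A] {x : (Σ i, S i) → A}
    (hx : resultant (bezoutian (paramPoly x 0) (paramPoly x 1) 1)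
      (bezoutian (paramPoly x 2) (paramPoly x 3) 1) k m ≠ 0) :
    HoldsGenerically fun c : (Σ i, S i) → K =>
      resultant (bezoutian (paramPoly c 0) (paramPoly c 1) 1)
        (bezoutian (paramPoly c 2) (paramPoly c 3) 1) k m ≠ 0 := by
  have hX : MvPolynomial.eval₂Hom (algebraMap K A) x ∘ MvPolynomial.X = x :=
    funext (MvPolynomial.eval₂Hom_X' _ x)
  rw [← hX, ← map_resultant_bezoutian_paramPoly] at hx
  refine (HoldsGenerically.of_aeval_ne_zero hx).mono fun c hc => ?_
  rwa [map_resultant_bezoutian_paramPoly,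
    show MvPolynomial.eval c ∘ MvPolynomial.X = c from funext MvPolynomial.eval_X] at hc

theorem exists_resultant_bezoutian_ne_zero [IsAlgClosed K] {S : Fin 4 → Finset ℕ}
    (hS : ∀ i, (S i).Nonempty) (h₀ : 0 ∈ S 0 ∪ S 1) (h₁ : 0 ∈ S 2 ∪ S 3)
    (hgcd : ((S 0 ∪ S 1 ∪ S 2 ∪ S 3).filter (· ≠ 0)).gcd id = 1) {n m : ℕ}
    (hn : IsGreatest ↑(S 0 ∪ S 1) n) (hm : IsGreatest ↑(S 2 ∪ S 3) m) (hn0 : n ≠ 0) (hm0 : m ≠ 0) :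
    ∃ c : (Σ i, S i) → K, resultant (bezoutian (paramPoly c 0) (paramPoly c 1) 1)
      (bezoutian (paramPoly c 2) (paramPoly c 3) 1) (n - 1) m ≠ 0 := by
  obtain ⟨p₀, q₀, p₁, q₁, hcoeff, hcop⟩ := exists_isCoprime_bezoutian_one (K := K) (hS 0) (hS 1)
    (hS 2) (hS 3) h₀ h₁ hn.1 hm.1 hn0 hm0 fun x => by
      obtain ⟨s, hs, hx⟩ := exists_geom_sum_ne_zero_of_gcd_eq_one hgcd x
      exact ⟨s, by simpa [or_assoc] using (Finset.mem_filter.mp hs).1, hx⟩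
  let c : (Σ i, S i) → K
    | ⟨0, s⟩ => p₀ s
    | ⟨1, s⟩ => q₀ s
    | ⟨2, s⟩ => p₁ s
    | ⟨3, s⟩ => q₁ s
  change (bezoutian (paramPoly c 0) (paramPoly c 1) 1).coeff (n - 1) ≠ 0 at hcoeff
  have hle {i j : Fin 4} {k : ℕ} (hk : IsGreatest ↑(S i ∪ S j) k) :
      (bezoutian (paramPoly c i) (paramPoly c j) 1).natDegree ≤ k - 1 :=
    natDegree_bezoutian_le
      (natDegree_paramPoly_le (fun _ hs => hk.2 (Finset.mem_union_left _ hs)) c)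
      (natDegree_paramPoly_le (fun _ hs => hk.2 (Finset.mem_union_right _ hs)) c) 1
  refine ⟨c, ?_⟩
  rw [← (hle hn).antisymm (le_natDegree_of_ne_zero hcoeff)]
  exact resultant_ne_zero_of_isCoprime (fun h => hcoeff (by rw [h, coeff_zero]))
    ((hle hm).trans (Nat.sub_le m 1)) hcop

end GenericResultant

section ImplicitEquation

variable {K : Type*} [Field K] {S : Fin 4 → Finset ℕ} (hS : ∀ i, (S i).Nonempty) {n m : ℕ}

theorem isCoprime_paramPoly {c : (Σ i, S i) → K} (hc : ∀ v, c v ≠ 0) (h₀ : 0 ∈ S 0 ∪ S 1)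
    (hn : ∀ s ∈ S 1, s ≤ n) (hn0 : n ≠ 0)
    (h : resultant (reducedParamPoly c (hS 0)) (paramPoly c 1)
      ((S 0).max' (hS 0) - (S 0).min' (hS 0)) n ≠ 0) :
    IsCoprime (paramPoly c 0) (paramPoly c 1) := by
  rw [← X_pow_mul_reducedParamPoly (hS 0)]
  refine isCoprime_X_pow_mul_of_resultant_ne_zero (natDegree_reducedParamPoly_le _ c)
    (natDegree_paramPoly_le hn c) hn0 h ?_
  rw [Ne, coeff_paramPoly_eq_zero_iff hc, not_not]
  exact (Finset.mem_union.mp h₀).imp_left fun h => Nat.le_zero.mp ((S 0).min'_le 0 h)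

theorem isLeast_coeff_map_eval_zero_of_irreducible
    (h₀ : 0 ∈ S 0 ∪ S 1) (h₁ : 0 ∈ S 2 ∪ S 3)
    (hn : IsGreatest ↑(S 0 ∪ S 1) n) (hm : IsGreatest ↑(S 2 ∪ S 3) m) (hn0 : n ≠ 0) (hm0 : m ≠ 0)
    {c : (Σ i, S i) → K} (hc : ∀ v, c v ≠ 0)
    (hQ₀ : resultant (reducedParamPoly c (hS 0)) (paramPoly c 1)
      ((S 0).max' (hS 0) - (S 0).min' (hS 0)) n ≠ 0)
    (hP₁ : resultant (reducedParamPoly c (hS 0)) (paramPoly c 2)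
      ((S 0).max' (hS 0) - (S 0).min' (hS 0)) m ≠ 0)
    (hbez : resultant (bezoutian (paramPoly c 0) (paramPoly c 1) 1)
      (bezoutian (paramPoly c 2) (paramPoly c 3) 1) (n - 1) m ≠ 0)
    {Φ : K[X][X]} (hΦ : Irreducible Φ)
    (h : aevalAeval (algebraMap K[X] (RatFunc K) (paramPoly c 0) / algebraMap _ _ (paramPoly c 1))
      (algebraMap K[X] (RatFunc K) (paramPoly c 2) / algebraMap _ _ (paramPoly c 3)) Φ = 0) :
    IsLeast {j | (Φ.map (evalRingHom 0)).coeff j ≠ 0}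
      ((if 0 ∈ S 3 \ S 2 then (S 0).min' (hS 0) else 0) +
        (if m ∈ S 3 \ S 2 then n - (S 0).max' (hS 0) else 0)) := by
  classical
  have hdeg {i j : Fin 4} {k : ℕ} (hk : IsGreatest ↑(S i ∪ S j) k) :
      (paramPoly c i).natDegree ≤ k ∧ (paramPoly c j).natDegree ≤ k :=
    ⟨natDegree_paramPoly_le (fun _ hs => hk.2 (Finset.mem_union_left _ hs)) c,
      natDegree_paramPoly_le (fun _ hs => hk.2 (Finset.mem_union_right _ hs)) c⟩
  have hif {k : ℕ} (hk : k ∈ S 2 ∪ S 3) : (paramPoly c 2).coeff k = 0 ↔ k ∈ S 3 \ S 2 := by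
    rw [coeff_paramPoly_eq_zero_iff hc, Finset.mem_sdiff, iff_and_self]
    exact (Finset.mem_union.mp hk).resolve_left
  have hsum : (S 0).min' (hS 0) + ((S 0).max' (hS 0) - (S 0).min' (hS 0)) +
      (n - (S 0).max' (hS 0)) = n := by
    have hmin := (S 0).min'_le_max' (hS 0)
    have hmax := hn.2 (Finset.mem_union_left _ ((S 0).max'_mem (hS 0)))
    omega
  have hcop := isCoprime_paramPoly hS hc h₀ (fun s hs => hn.2 (Finset.mem_union_right _ hs)) hn0 hQ₀
  have hP := X_pow_mul_reducedParamPoly (hS 0) c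
  have hP₀ := paramPoly_ne_zero hc (hS 0)
  have hmax := max_natDegree_eq (hdeg hn).1 (hdeg hn).2 (coeff_paramPoly_ne_zero_or hc hn.1)
  rw [← hP] at hcop hmax hbez h hP₀
  obtain ⟨hr, hr'⟩ := natTrailingDegree_map_eval_zero_of_irreducible hmax hsum hn0 hm0
    (natDegree_reducedParamPoly_le _ c) (hdeg hm).1 (hdeg hm).2 (right_ne_zero_of_mul hP₀)
    (paramPoly_ne_zero hc (hS 1)) (paramPoly_ne_zero hc (hS 3)) hcop hbez hP₁
    (coeff_paramPoly_ne_zero_or hc h₁) (coeff_paramPoly_ne_zero_or hc hm.1) hΦ h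
  rw [if_congr (hif h₁) rfl rfl, if_congr (hif hm.1) rfl rfl] at hr'
  exact hr' ▸ isLeast_natTrailingDegree hr

theorem implicit_xmin_ymin_general (h₀ : 0 ∈ S 0 ∪ S 1) (h₁ : 0 ∈ S 2 ∪ S 3)
    (hgcd : ((S 0 ∪ S 1 ∪ S 2 ∪ S 3).filter (· ≠ 0)).gcd id = 1)
    (hn : IsGreatest ↑(S 0 ∪ S 1) n) (hm : IsGreatest ↑(S 2 ∪ S 3) m)
    (hn0 : n ≠ 0) (hm0 : m ≠ 0) :
    HoldsGenerically fun c : (Σ i, S i) → K => ∀ φ : MvPolynomial (Fin 2) K, Irreducible φ →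
      MvPolynomial.aeval
        ![algebraMap K[X] (RatFunc K) (paramPoly c 0) / algebraMap _ _ (paramPoly c 1),
          algebraMap K[X] (RatFunc K) (paramPoly c 2) / algebraMap _ _ (paramPoly c 3)] φ = 0 →
      IsLeast {j | Finsupp.single 1 j ∈ φ.support}
        ((if 0 ∈ S 3 \ S 2 then (S 0).min' (hS 0) else 0) +
          (if m ∈ S 3 \ S 2 then n - (S 0).max' (hS 0) else 0)) := by
  obtain ⟨x, hx⟩ := exists_resultant_bezoutian_ne_zero (K := AlgebraicClosure K) hS h₀ h₁ hgcd
    hn hm hn0 hm0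
  refine (HoldsGenerically.forall_ne_zero.and
    ((holdsGenerically_resultant_reducedParamPoly_ne_zero (j := 1) (by decide) (hS 0) (hS 1)
      fun s hs => hn.2 (Finset.mem_union_right _ hs)).and
    ((holdsGenerically_resultant_reducedParamPoly_ne_zero (j := 2) (by decide) (hS 0) (hS 2)
      fun s hs => hm.2 (Finset.mem_union_left _ hs)).and
    (holdsGenerically_resultant_bezoutian_of_ne_zero hx)))).mono ?_
  rintro c ⟨hc, hQ₀, hP₁, hbez⟩ φ hφ h
  rw [← aevalAeval_equivMvPolynomial_symm] at h
  simpa only [MvPolynomial.mem_support_iff, ← coeff_map_eval_zero_equivMvPolynomial_symm] using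
    isLeast_coeff_map_eval_zero_of_irreducible hS h₀ h₁ hn hm hn0 hm0 hc hQ₀ hP₁ hbez
      ((MulEquiv.irreducible_iff (Bivariate.equivMvPolynomial K).symm).mpr hφ) h

end ImplicitEquation

/-- When `SQ₀ ⊄ SP₀` and `SQ₁ ⊄ SP₁`: the implicit equation has a monomial not involving `x`,
and the smallest `j` with `(0, j)` in the support of `φ` is the stated quantity. -/
theorem implicit_xmin_ymin (SS : Fin 4 → Finset ℕ) (hne : ∀ i, (SS i).Nonempty)
    (h00 : 0 ∈ SS 0 ∪ SS 1) (h01 : 0 ∈ SS 2 ∪ SS 3)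
    (hgcd : ((SS 0 ∪ SS 1 ∪ SS 2 ∪ SS 3).filter (fun s => s ≠ 0)).gcd id = 1)
    (a0n a1m : ℕ)
    (ha0nmem : a0n ∈ SS 0 ∪ SS 1) (ha0nmax : ∀ s ∈ SS 0 ∪ SS 1, s ≤ a0n)
    (ha1mmem : a1m ∈ SS 2 ∪ SS 3) (ha1mmax : ∀ s ∈ SS 2 ∪ SS 3, s ≤ a1m)
    (ha0n1 : 1 ≤ a0n) (ha1m1 : 1 ≤ a1m)
    (hQ0 : ¬ SS 1 ⊆ SS 0) (hQ1 : ¬ SS 3 ⊆ SS 2) :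
    ∃ G : MvPolynomial (Σ i : Fin 4, {s // s ∈ SS i}) ℂ, G ≠ 0 ∧
      ∀ c : (Σ i : Fin 4, {s // s ∈ SS i}) → ℂ, MvPolynomial.eval c G ≠ 0 →
        ∀ φ : MvPolynomial (Fin 2) ℂ, Irreducible φ → vanishesDiff SS c φ →
          (∃ j : ℕ, (Finsupp.single 1 j : Fin 2 →₀ ℕ) ∈ φ.support) ∧
          IsLeast {j : ℕ | (Finsupp.single 1 j : Fin 2 →₀ ℕ) ∈ φ.support}
            ((if 0 ∈ SS 3 \ SS 2 then (SS 0).min' (hne 0) else 0) +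
              (if a1m ∈ SS 3 \ SS 2 then a0n - (SS 0).max' (hne 0) else 0)) := by
  obtain ⟨G, hG, h⟩ := implicit_xmin_ymin_general (K := ℂ) hne h00 h01 hgcd ⟨ha0nmem, ha0nmax⟩
    ⟨ha1mmem, ha1mmax⟩ (Nat.one_le_iff_ne_zero.mp ha0n1) (Nat.one_le_iff_ne_zero.mp ha1m1)
  exact ⟨G, hG, fun c hc φ hφ hv => have hj := h c hc φ hφ hv; ⟨⟨_, hj.1⟩, hj⟩⟩
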